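/- ψ(1/10) = −γ − ln 20 − (√(10 + 2√5)/(√5 − 1))·(π/2) + (1/2)·(√5·ln(√5 − 2) − ln √5), where ψ is the digamma function and γ is the Euler–Mascheroni constant. -/

import Mathlib

noncomputable def digamma (x : ℝ) : ℝ := deriv Real.Gamma x / Real.Gamma x

/-!
By Gauss, `ψ(r/m)` is elementary for every rational `r/m` in `(0, 1)`. The convexity of `log Γ`
gives `ψ(x) - log x → 0`, so iterating `ψ(x + 1) = ψ(x) + 1/x` yields
`ψ(r/m) + γ = ∑ k, (1/(k + 1) - 1/(k + r/m))`. Here `1/(k + r/m) = m/(mk + r)`, and the terms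
`n ≡ r (mod m)` of the harmonic series are selected by averaging over the powers of a primitive
`m`-th root of unity `ζ`. The divergent contribution of `ζ ^ 0 = 1` cancels between the two sums,
and every other power lies on the unit circle away from `1`, where the logarithm series converges
(Dirichlet's test) to the expected value (Abel's theorem). Hence
`ψ(r/m) + γ = ∑ j ∈ [1, m), (ζ ^ (-jr) - 1) log (1 - ζ ^ j)`, whose real part is computed from
`1 - exp(2iβ) = 2 sin β · exp(i(β - π/2))`.

For `r/m = 1/10` the golden ratio `φ` governs the remaining trigonometric values:
`2 sin(π/10) = φ⁻¹` and `2 sin(3π/10) = φ`, while `2 sin(π/5)` and `2 sin(2π/5)` have squares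
`√5 φ⁻¹` and `√5 φ`.
-/

open Filter Topology Real Finset

section Digamma

variable {x : ℝ}

lemma ne_neg_natCast_of_pos (hx : 0 < x) (n : ℕ) : x ≠ -n :=
  ((neg_nonpos.mpr n.cast_nonneg).trans_lt hx).ne'

lemma digamma_eq_re (hx : ∀ n : ℕ, x ≠ -n) : digamma x = (Complex.digamma x).re := by
  have h_diff : DifferentiableAt ℂ Complex.Gamma x :=
    Complex.differentiableAt_Gamma x fun n h ↦ hx n (mod_cast h)
  have h_deriv : HasDerivAt Gamma (deriv Complex.Gamma x).re x := h_diff.hasDerivAt.real_of_complex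
  rw [digamma, h_deriv.deriv, Complex.digamma_def, logDeriv_apply, Complex.Gamma_ofReal,
    Complex.div_ofReal_re]

lemma digamma_add_one (hx : ∀ n : ℕ, x ≠ -n) : digamma (x + 1) = digamma x + x⁻¹ := by
  have hx' (n : ℕ) : x + 1 ≠ -n := fun h ↦ hx (n + 1) (by push_cast; linarith)
  rw [digamma_eq_re hx', digamma_eq_re hx, Complex.ofReal_add, Complex.ofReal_one,
    Complex.digamma_apply_add_one x fun n h ↦ hx n (mod_cast h), Complex.add_re,
    ← Complex.ofReal_inv, Complex.ofReal_re]

lemma digamma_one : digamma 1 = -eulerMascheroniConstant := by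
  rw [digamma, hasDerivAt_Gamma_one.deriv, Gamma_one, div_one]

lemma digamma_add_natCast (hx : 0 < x) (n : ℕ) :
    digamma (x + n) = digamma x + ∑ k ∈ range n, (k + x)⁻¹ := by
  induction n with
  | zero => simp
  | succ n ih =>
    rw [sum_range_succ, ← add_assoc, ← ih, Nat.cast_succ, ← add_assoc,
      digamma_add_one (ne_neg_natCast_of_pos (by positivity)), add_comm x]

lemma hasDerivAt_log_Gamma (hx : 0 < x) : HasDerivAt (log ∘ Gamma) (digamma x) x :=
  (differentiableAt_Gamma (ne_neg_natCast_of_pos hx)).hasDerivAt.log (Gamma_pos_of_pos hx).ne'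

lemma slope_log_Gamma_add_one (hx : 0 < x) : slope (log ∘ Gamma) x (x + 1) = log x := by
  rw [slope_def_field, Function.comp_apply, Function.comp_apply, Gamma_add_one hx.ne',
    log_mul hx.ne' (Gamma_pos_of_pos hx).ne']
  ring

lemma digamma_le_log (hx : 0 < x) : digamma x ≤ log x := by
  rw [← slope_log_Gamma_add_one hx]
  exact convexOn_log_Gamma.le_slope_of_hasDerivAt hx (Set.mem_Ioi.mpr (by positivity))
    (lt_add_one x) (hasDerivAt_log_Gamma hx)

lemma log_sub_inv_le_digamma (hx : 0 < x) : log x - x⁻¹ ≤ digamma x := by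
  rw [sub_le_iff_le_add, ← digamma_add_one (ne_neg_natCast_of_pos hx),
    ← slope_log_Gamma_add_one hx]
  exact convexOn_log_Gamma.slope_le_of_hasDerivAt hx (Set.mem_Ioi.mpr (by positivity))
    (lt_add_one x) (hasDerivAt_log_Gamma (by positivity))

lemma tendsto_digamma_sub_log : Tendsto (fun x ↦ digamma x - log x) atTop (𝓝 0) := by
  have h_neg_inv : Tendsto (fun x : ℝ ↦ -x⁻¹) atTop (𝓝 0) := by
    simpa using (tendsto_inv_atTop_zero (𝕜 := ℝ)).neg
  refine tendsto_of_tendsto_of_tendsto_of_le_of_le' h_neg_inv tendsto_const_nhds ?_ ?_ <;>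
    filter_upwards [eventually_gt_atTop 0] with x hx
  · linarith [log_sub_inv_le_digamma hx]
  · linarith [digamma_le_log hx]

lemma tendsto_digamma_add_sub_log (y : ℝ) :
    Tendsto (fun x ↦ digamma (y + x) - log x) atTop (𝓝 0) := by
  have h := (tendsto_digamma_sub_log.comp (tendsto_atTop_add_const_right atTop y tendsto_id)).add
    (tendsto_log_comp_add_sub_log y)
  simpa [Function.comp_def, add_comm y] using h

lemma tendsto_sum_inv_sub_inv (hx : 0 < x) :
    Tendsto (fun n : ℕ ↦ ∑ k ∈ range n, ((k + 1 : ℝ)⁻¹ - (k + x)⁻¹)) atTop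
      (𝓝 (digamma x + eulerMascheroniConstant)) := by
  have h_error : Tendsto (fun n : ℕ ↦ digamma (1 + n) - digamma (x + n)) atTop (𝓝 0) := by
    simpa [Function.comp_def] using ((tendsto_digamma_add_sub_log 1).sub
      (tendsto_digamma_add_sub_log x)).comp tendsto_natCast_atTop_atTop
  have h := h_error.const_add (digamma x + eulerMascheroniConstant)
  rw [add_zero] at h
  refine h.congr fun n ↦ ?_
  rw [sum_sub_distrib, digamma_add_natCast one_pos, digamma_add_natCast hx, digamma_one]
  ring

end Digamma

section FiniteSums

lemma sum_Ico_one_two_mul_of_reflect {M : Type*} [AddCommMonoid M] {f : ℕ → M} {n : ℕ}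
    (hn : 0 < n) (hf : ∀ j ∈ Ico 1 n, f (2 * n - j) = f j) :
    ∑ j ∈ Ico 1 (2 * n), f j = 2 • ∑ j ∈ Ico 1 n, f j + f n := by
  have h_upper : ∑ j ∈ Ico (n + 1) (2 * n), f j = ∑ j ∈ Ico 1 n, f j := by
    rw [← sum_congr rfl hf, sum_Ico_reflect f 1 (by lia)]
    congr 2
    lia
  rw [← sum_Ico_consecutive f hn (by lia), sum_eq_sum_Ico_succ_bot (show n < 2 * n by lia),
    h_upper, two_nsmul, add_left_comm, add_comm]

end FiniteSums

section RootsOfUnity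

variable {K : Type*} [Field K] {ζ z : K} {m i : ℕ}

lemma sum_pow_mul_inv_pow (hζ : IsPrimitiveRoot ζ m) (i n : ℕ) :
    ∑ j ∈ range m, ((ζ ^ j)⁻¹) ^ i * (ζ ^ j) ^ n = if n ≡ i [MOD m] then (m : K) else 0 := by
  rcases m.eq_zero_or_pos with rfl | hm
  · simp
  have hζ0 : ζ ≠ 0 := hζ.ne_zero hm.ne'
  have h_geom : ∑ j ∈ range m, ((ζ ^ j)⁻¹) ^ i * (ζ ^ j) ^ n =
      ∑ j ∈ range m, (ζ ^ n / ζ ^ i) ^ j :=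
    sum_congr rfl fun j _ ↦ by rw [div_pow, ← pow_mul, ← pow_mul, inv_pow, ← pow_mul, ← pow_mul,
      mul_comm j, mul_comm j, div_eq_inv_mul]
  have h_one : ζ ^ n / ζ ^ i = 1 ↔ n ≡ i [MOD m] := by
    rw [div_eq_one_iff_eq (pow_ne_zero i hζ0), (hζ.isOfFinOrder hm.ne').pow_eq_pow_iff_modEq,
      ← hζ.eq_orderOf]
  rw [h_geom]
  split_ifs with h
  · simp [h_one.mpr h]
  · rw [geom_sum_eq (mt h_one.mp h), div_pow, pow_right_comm, pow_right_comm ζ i, hζ.pow_eq_one]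
    simp

lemma sum_range_mul_ite_modEq {M : Type*} [AddCommMonoid M] (f : ℕ → M)
    (hi : i < m) (N : ℕ) :
    ∑ n ∈ range (m * N), (if n ≡ i [MOD m] then f n else 0) = ∑ k ∈ range N, f (m * k + i) := by
  induction N with
  | zero => simp
  | succ N ih =>
    have h_mod (l : ℕ) (hl : l ∈ range m) : m * N + l ≡ i [MOD m] ↔ l = i := by
      simp [Nat.ModEq, Nat.mod_eq_of_lt hi, Nat.mod_eq_of_lt (mem_range.mp hl)]
    rw [mul_add_one, sum_range_add, ih, sum_range_succ,
      sum_congr rfl fun l hl ↦ if_congr (h_mod l hl) rfl rfl]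
    simp [hi]

lemma natCast_mul_sum_arithProg (hζ : IsPrimitiveRoot ζ m) (f : ℕ → K) (hi : i < m)
    (N : ℕ) : m * ∑ k ∈ range N, f (m * k + i) =
      ∑ j ∈ range m, ((ζ ^ j)⁻¹) ^ i * ∑ n ∈ range (m * N), (ζ ^ j) ^ n * f n := by
  simp_rw [← sum_range_mul_ite_modEq f hi, mul_sum, ← mul_assoc]
  rw [sum_comm]
  simp_rw [← sum_mul, sum_pow_mul_inv_pow hζ, ite_mul, mul_ite, mul_zero, zero_mul]

lemma sub_one_mul_sum_natCast_mul_pow {R : Type*} [CommRing R] (z : R) (n : ℕ) :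
    (z - 1) * ∑ j ∈ range n, j * z ^ j = n * z ^ n - z * ∑ j ∈ range n, z ^ j := by
  induction n with
  | zero => simp
  | succ n ih =>
    simp only [sum_range_succ, mul_add, ih]
    push_cast
    ring

lemma sum_natCast_mul_pow_of_pow_eq_one (hz : z ^ m = 1) (hz1 : z ≠ 1) :
    ∑ j ∈ range m, j * z ^ j = m / (z - 1) := by
  rw [eq_div_iff (sub_ne_zero.mpr hz1), mul_comm, sub_one_mul_sum_natCast_mul_pow,
    geom_sum_eq hz1, hz]
  simp

end RootsOfUnity

section Log

variable {z : ℂ}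

lemma cauchySeq_sum_pow_div (hz : ‖z‖ ≤ 1) (hz1 : z ≠ 1) :
    CauchySeq fun N ↦ ∑ n ∈ range N, z ^ (n + 1) / (n + 1) := by
  have h_bound (N : ℕ) : ‖∑ n ∈ range N, z ^ (n + 1)‖ ≤ 2 / ‖z - 1‖ := by
    simp_rw [pow_succ, ← sum_mul]
    rw [geom_sum_eq hz1, norm_mul, norm_div]
    calc ‖z ^ N - 1‖ / ‖z - 1‖ * ‖z‖
        ≤ ‖z ^ N - 1‖ / ‖z - 1‖ := mul_le_of_le_one_right (by positivity) hz
      _ ≤ 2 / ‖z - 1‖ := by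
          gcongr
          calc ‖z ^ N - 1‖ ≤ ‖z ^ N‖ + ‖(1 : ℂ)‖ := norm_sub_le _ _
            _ ≤ 2 := by linarith [norm_pow z N, pow_le_one₀ (n := N) (norm_nonneg z) hz,
                norm_one (α := ℂ)]
  have h_anti : Antitone fun n : ℕ ↦ 1 / ((n : ℝ) + 1) := fun _ _ ↦ Nat.one_div_le_one_div
  convert h_anti.cauchySeq_series_mul_of_tendsto_zero_of_bounded
    tendsto_one_div_add_atTop_nhds_zero_nat h_bound using 4 with N n
  rw [Complex.real_smul]
  push_cast
  ring

lemma one_sub_mem_slitPlane (hz : ‖z‖ ≤ 1) (hz1 : z ≠ 1) : 1 - z ∈ Complex.slitPlane := by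
  rw [Complex.mem_slitPlane_iff]
  by_contra! h
  have h_re : 1 ≤ z.re := by simpa using h.1
  have h_im : z.im = 0 := by simpa using h.2
  exact hz1 (Complex.ext (((Complex.re_le_norm z).trans hz).antisymm h_re) h_im)

theorem tendsto_sum_pow_div_neg_log (hz : ‖z‖ ≤ 1) (hz1 : z ≠ 1) :
    Tendsto (fun N ↦ ∑ n ∈ range N, z ^ (n + 1) / (n + 1)) atTop (𝓝 (-Complex.log (1 - z))) := by
  obtain ⟨l, hl⟩ := cauchySeq_tendsto_of_complete (cauchySeq_sum_pow_div hz hz1)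
  have h_abel : Tendsto (fun x : ℝ ↦ ∑' n : ℕ, z ^ (n + 1) / (n + 1) * (x : ℂ) ^ n)
      (𝓝[<] 1) (𝓝 l) :=
    tendsto_map'_iff.mp (Complex.tendsto_tsum_powerSeries_nhdsWithin_lt hl)
  have h_tsum : ∀ᶠ x : ℝ in 𝓝[<] 1,
      ∑' n : ℕ, z ^ (n + 1) / (n + 1) * (x : ℂ) ^ n = -Complex.log (1 - z * x) / x := by
    filter_upwards [Ioo_mem_nhdsLT zero_lt_one] with x hx
    have h_norm : ‖z * x‖ < 1 := by
      rw [norm_mul, Complex.norm_of_nonneg hx.1.le]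
      exact (mul_le_of_le_one_left hx.1.le hz).trans_lt hx.2
    rw [← ((Complex.hasSum_taylorSeries_neg_log' h_norm).div_const (x : ℂ)).tsum_eq]
    refine tsum_congr fun n ↦ ?_
    have hx0 : (x : ℂ) ≠ 0 := mod_cast hx.1.ne'
    field_simp
    ring
  have h_log : ContinuousAt (fun x : ℝ ↦ -Complex.log (1 - z * x) / x) 1 := by
    have h_slit : 1 - z * (1 : ℝ) ∈ Complex.slitPlane := by
      simpa using one_sub_mem_slitPlane hz hz1
    have h_one : ((1 : ℝ) : ℂ) ≠ 0 := by simp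
    fun_prop (disch := assumption)
  have h_limit : Tendsto (fun x : ℝ ↦ -Complex.log (1 - z * x) / x) (𝓝[<] 1)
      (𝓝 (-Complex.log (1 - z))) := by
    simpa using h_log.tendsto.mono_left nhdsWithin_le_nhds
  rwa [← tendsto_nhds_unique (h_abel.congr' h_tsum) h_limit]

lemma log_one_sub_exp {β : ℝ} (h0 : 0 < β) (hπ : β < π) :
    Complex.log (1 - Complex.exp (2 * β * Complex.I)) =
      ⟨log (2 * sin β), β - π / 2⟩ := by
  have h_sin : 0 < 2 * sin β := mul_pos two_pos (sin_pos_of_pos_of_lt_pi h0 hπ)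
  have h_polar : 1 - Complex.exp (2 * β * Complex.I) =
      (2 * sin β : ℝ) * Complex.exp ((β - π / 2 : ℝ) * Complex.I) := by
    rw [Complex.exp_mul_I, Complex.exp_mul_I, ← Complex.ofReal_cos, ← Complex.ofReal_sin,
      cos_sub_pi_div_two, sin_sub_pi_div_two, Complex.cos_two_mul, Complex.sin_two_mul]
    push_cast
    linear_combination (-2 : ℂ) * Complex.sin_sq_add_cos_sq (β : ℂ)
  refine Complex.ext ?_ ?_
  · rw [Complex.log_re, h_polar, norm_mul, Complex.norm_exp_ofReal_mul_I,
      Complex.norm_of_nonneg h_sin.le, mul_one]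
  · rw [Complex.log_im, h_polar, Complex.exp_mul_I,
      Complex.arg_mul_cos_add_sin_mul_I h_sin ⟨by linarith, by linarith⟩]

lemma inv_exp_sub_one_im {α : ℝ} (hα : sin α ≠ 0) :
    (Complex.exp (2 * α * Complex.I) - 1)⁻¹.im = -cot α / 2 := by
  have h_rect : Complex.exp (2 * α * Complex.I) - 1 = ⟨-2 * sin α ^ 2, 2 * sin α * cos α⟩ := by
    rw [Complex.exp_mul_I, Complex.cos_two_mul', Complex.sin_two_mul, Complex.mk_eq_add_mul_I]
    push_cast
    linear_combination Complex.sin_sq_add_cos_sq (α : ℂ)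
  have h_normSq : Complex.normSq ⟨-2 * sin α ^ 2, 2 * sin α * cos α⟩ = 4 * sin α ^ 2 := by
    rw [Complex.normSq_mk]
    linear_combination 4 * sin α ^ 2 * sin_sq_add_cos_sq α
  rw [h_rect, Complex.inv_im, h_normSq, cot_eq_cos_div_sin]
  field_simp
  ring

end Log

section Gauss

variable {m r : ℕ}

lemma sum_inv_add_div {ζ : ℂ} (hζ : IsPrimitiveRoot ζ m) (hr0 : 0 < r) (hrm : r ≤ m) (N : ℕ) :
    ∑ k ∈ range N, ((k : ℂ) + r / m)⁻¹ =
      ∑ j ∈ range m, ((ζ ^ j)⁻¹) ^ r * ∑ n ∈ range (m * N), (ζ ^ j) ^ (n + 1) / (n + 1) := by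
  have hm : (m : ℂ) ≠ 0 := by exact_mod_cast (hr0.trans_le hrm).ne'
  obtain ⟨i, rfl⟩ : ∃ i, r = i + 1 := Nat.exists_eq_add_one.mpr hr0
  calc ∑ k ∈ range N, ((k : ℂ) + (i + 1 : ℕ) / m)⁻¹
      = m * ∑ k ∈ range N, (((m * k + i : ℕ) : ℂ) + 1)⁻¹ := by
        rw [mul_sum]
        refine sum_congr rfl fun k _ ↦ ?_
        rw [← inv_inv (m : ℂ), ← mul_inv]
        push_cast
        congr 1
        field_simp
        ring
    _ = ∑ j ∈ range m, ((ζ ^ j)⁻¹) ^ i * ∑ n ∈ range (m * N), (ζ ^ j) ^ n * ((n : ℂ) + 1)⁻¹ :=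
        natCast_mul_sum_arithProg hζ (fun n ↦ ((n : ℂ) + 1)⁻¹) hrm N
    _ = _ := by
        have hζ0 : ζ ≠ 0 := hζ.ne_zero (hr0.trans_le hrm).ne'
        simp_rw [mul_sum]
        refine sum_congr rfl fun j _ ↦ sum_congr rfl fun n _ ↦ ?_
        rw [pow_succ _ i, pow_succ _ n]
        field_simp

theorem digamma_natCast_div_eq_sum_log {ζ : ℂ} (hζ : IsPrimitiveRoot ζ m) (hr0 : 0 < r)
    (hrm : r ≤ m) :
    ((digamma (r / m) + eulerMascheroniConstant : ℝ) : ℂ) =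
      ∑ j ∈ Ico 1 m, (((ζ ^ j)⁻¹) ^ r - 1) * Complex.log (1 - ζ ^ j) := by
  have hm : 0 < m := hr0.trans_le hrm
  have h_partial (N : ℕ) : ((∑ k ∈ range N, ((k + 1 : ℝ)⁻¹ - (k + r / m : ℝ)⁻¹) : ℝ) : ℂ) =
      ∑ j ∈ Ico 1 m, (1 - ((ζ ^ j)⁻¹) ^ r) *
        ∑ n ∈ range (m * N), (ζ ^ j) ^ (n + 1) / (n + 1) := by
    have h_harmonic : ∑ k ∈ range N, ((k : ℂ) + 1)⁻¹ =
        ∑ j ∈ range m, ∑ n ∈ range (m * N), (ζ ^ j) ^ (n + 1) / (n + 1) := by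
      simpa [hm.ne', pow_right_comm ζ _ m, hζ.pow_eq_one] using sum_inv_add_div hζ hm le_rfl N
    push_cast
    rw [sum_sub_distrib, h_harmonic, sum_inv_add_div hζ hr0 hrm, ← sum_sub_distrib,
      range_eq_Ico, sum_eq_sum_Ico_succ_bot hm]
    simp [sub_mul]
  have h_limit : Tendsto (fun N ↦ ∑ j ∈ Ico 1 m, (1 - ((ζ ^ j)⁻¹) ^ r) *
      ∑ n ∈ range (m * N), (ζ ^ j) ^ (n + 1) / (n + 1)) atTop
      (𝓝 (∑ j ∈ Ico 1 m, (1 - ((ζ ^ j)⁻¹) ^ r) * -Complex.log (1 - ζ ^ j))) := by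
    refine tendsto_finsetSum _ fun j hj ↦ ((tendsto_sum_pow_div_neg_log ?_ ?_).comp
      (tendsto_id.const_mul_atTop' hm)).const_mul _
    · rw [norm_pow, hζ.norm'_eq_one hm.ne', one_pow]
    · exact hζ.pow_ne_one_of_pos_of_lt (by grind) (mem_Ico.mp hj).2
  have h_digamma := (Complex.continuous_ofReal.tendsto _).comp
    (tendsto_sum_inv_sub_inv (x := r / m) (by positivity))
  rw [tendsto_nhds_unique (h_digamma.congr h_partial) h_limit]
  exact sum_congr rfl fun j _ ↦ by ring

lemma exp_two_pi_mul_I_div_pow (m j : ℕ) :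
    Complex.exp (2 * π * Complex.I / m) ^ j =
      Complex.exp (2 * (π * j / m : ℝ) * Complex.I) := by
  rw [← Complex.exp_nat_mul]
  push_cast
  ring_nf

lemma exp_two_pi_mul_I_div_pow_pow (m r j : ℕ) :
    (Complex.exp (2 * π * Complex.I / m) ^ r) ^ j =
      ⟨cos (2 * (π * r * j / m)), sin (2 * (π * r * j / m))⟩ := by
  rw [← pow_mul, exp_two_pi_mul_I_div_pow, Nat.cast_mul, ← mul_assoc,
    show (2 * (π * r * j / m : ℝ) : ℂ) = (2 * (π * r * j / m) : ℝ) by push_cast; rfl,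
    Complex.mk_eq_add_mul_I, Complex.exp_mul_I, Complex.ofReal_cos, Complex.ofReal_sin]

lemma pi_mul_div_mem_Ioo {j : ℕ} (hj : j ∈ Ico 1 m) : π * j / m ∈ Set.Ioo 0 π := by
  obtain ⟨hj1, hjm⟩ := mem_Ico.mp hj
  have hj0 : (0 : ℝ) < j := by exact_mod_cast hj1
  have hm0 : (0 : ℝ) < m := by exact_mod_cast zero_lt_one.trans (hj1.trans_lt hjm)
  refine ⟨div_pos (mul_pos pi_pos hj0) hm0, ?_⟩
  rw [div_lt_iff₀ hm0]
  gcongr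

lemma pi_mul_sub_div {j : ℕ} (hm : m ≠ 0) (hj : j ≤ m) :
    π * (m - j : ℕ) / m = π - π * j / m := by
  rw [Nat.cast_sub hj]
  field_simp

lemma sum_log_two_sin (hm : 0 < m) : ∑ j ∈ Ico 1 m, log (2 * sin (π * j / m)) = log m := by
  have h_log (j : ℕ) (hj : j ∈ Ico 1 m) : log (2 * sin (π * j / m)) =
      log ‖1 - Complex.exp (2 * π * Complex.I / m) ^ j‖ := by
    obtain ⟨h0, hπ⟩ := pi_mul_div_mem_Ioo hj
    rw [exp_two_pi_mul_I_div_pow, ← Complex.log_re, log_one_sub_exp h0 hπ]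
  have hζ := Complex.isPrimitiveRoot_exp m hm.ne'
  have h_ne (j : ℕ) (hj : j ∈ Ico 1 m) :
      ‖1 - Complex.exp (2 * π * Complex.I / m) ^ j‖ ≠ 0 :=
    norm_ne_zero_iff.mpr (sub_ne_zero.mpr
      (hζ.pow_ne_one_of_pos_of_lt (by grind) (mem_Ico.mp hj).2).symm)
  obtain ⟨n, rfl⟩ : ∃ n, m = n + 1 := Nat.exists_eq_add_one.mpr hm
  rw [sum_congr rfl h_log, ← log_prod h_ne, ← norm_prod, prod_Ico_eq_prod_range,
    Nat.add_sub_cancel]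
  simp_rw [add_comm 1]
  rw [hζ.prod_one_sub_pow_eq_order, ← Nat.cast_add_one, Complex.norm_natCast]

lemma sum_sin_mul_sub_half_pi (hr0 : 0 < r) (hrm : r < m) :
    ∑ j ∈ Ico 1 m, sin (2 * (π * r * j / m)) * (π * j / m - π / 2) =
      -(π / 2) * cot (π * r / m) := by
  set z : ℂ := Complex.exp (2 * π * Complex.I / m) ^ r with hz
  have hm : 0 < m := hr0.trans hrm
  have hζ := Complex.isPrimitiveRoot_exp m hm.ne'
  have hz1 : z ≠ 1 := hζ.pow_ne_one_of_pos_of_lt hr0.ne' hrm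
  have hzm : z ^ m = 1 := by rw [hz, pow_right_comm, hζ.pow_eq_one, one_pow]
  have hm0 : (m : ℂ) ≠ 0 := by exact_mod_cast hm.ne'
  have h_sum : ∑ j ∈ range m, z ^ j * (π * j / m - π / 2 : ℝ) = π * (z - 1)⁻¹ := by
    calc ∑ j ∈ range m, z ^ j * (π * j / m - π / 2 : ℝ)
        = π / m * ∑ j ∈ range m, j * z ^ j - π / 2 * ∑ j ∈ range m, z ^ j := by
          rw [mul_sum, mul_sum, ← sum_sub_distrib]
          refine sum_congr rfl fun j _ ↦ ?_
          push_cast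
          ring
      _ = π * (z - 1)⁻¹ := by
          rw [sum_natCast_mul_pow_of_pow_eq_one hzm hz1, geom_sum_eq hz1, hzm]
          simp only [sub_self, zero_div, mul_zero, sub_zero]
          field_simp
  have h_sin_ne : sin (π * r / m) ≠ 0 :=
    (sin_pos_of_mem_Ioo (pi_mul_div_mem_Ioo (mem_Ico.mpr ⟨hr0, hrm⟩))).ne'
  have h_im (j : ℕ) : (z ^ j * (π * j / m - π / 2 : ℝ)).im =
      sin (2 * (π * r * j / m)) * (π * j / m - π / 2) := by
    rw [Complex.im_mul_ofReal, hz, exp_two_pi_mul_I_div_pow_pow]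
  calc ∑ j ∈ Ico 1 m, sin (2 * (π * r * j / m)) * (π * j / m - π / 2)
      = ∑ j ∈ range m, sin (2 * (π * r * j / m)) * (π * j / m - π / 2) := by
        rw [range_eq_Ico, sum_eq_sum_Ico_succ_bot hm]
        simp
    _ = (π * (z - 1)⁻¹).im := by
        rw [← h_sum, Complex.im_sum]
        exact sum_congr rfl fun j _ ↦ (h_im j).symm
    _ = -(π / 2) * cot (π * r / m) := by
        rw [Complex.im_ofReal_mul, hz, exp_two_pi_mul_I_div_pow, inv_exp_sub_one_im h_sin_ne]
        ring

theorem digamma_natCast_div_natCast (hr0 : 0 < r) (hrm : r < m) :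
    digamma (r / m) = -eulerMascheroniConstant - log m - π / 2 * cot (π * r / m) +
      ∑ j ∈ Ico 1 m, cos (2 * (π * r * j / m)) * log (2 * sin (π * j / m)) := by
  have hm : 0 < m := hr0.trans hrm
  have hζ := Complex.isPrimitiveRoot_exp m hm.ne'
  have h_term (j : ℕ) (hj : j ∈ Ico 1 m) :
      (((Complex.exp (2 * π * Complex.I / m) ^ j)⁻¹ ^ r - 1) *
        Complex.log (1 - Complex.exp (2 * π * Complex.I / m) ^ j)).re =
      cos (2 * (π * r * j / m)) * log (2 * sin (π * j / m)) - log (2 * sin (π * j / m)) +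
        sin (2 * (π * r * j / m)) * (π * j / m - π / 2) := by
    obtain ⟨h0, hπ⟩ := pi_mul_div_mem_Ioo hj
    have h_inv : ((Complex.exp (2 * π * Complex.I / m) ^ j)⁻¹) ^ r =
        ⟨cos (2 * (π * r * j / m)), -sin (2 * (π * r * j / m))⟩ := by
      rw [inv_pow, pow_right_comm, Complex.inv_eq_conj (by simp [hζ.norm'_eq_one hm.ne']),
        exp_two_pi_mul_I_div_pow_pow]
      rfl
    rw [h_inv, exp_two_pi_mul_I_div_pow, log_one_sub_exp h0 hπ, Complex.mul_re, Complex.sub_re,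
      Complex.sub_im, Complex.one_re, Complex.one_im]
    ring
  have h := congrArg Complex.re (digamma_natCast_div_eq_sum_log hζ hr0 hrm.le)
  rw [Complex.ofReal_re, Complex.re_sum, sum_congr rfl h_term, sum_add_distrib, sum_sub_distrib,
    sum_log_two_sin hm, sum_sin_mul_sub_half_pi hr0 hrm] at h
  linarith

end Gauss

section GoldenRatio

open goldenRatio

lemma goldenRatio_add_inv : φ + φ⁻¹ = √5 := by
  rw [inv_goldenRatio, ← sub_eq_add_neg, goldenRatio_sub_goldenConj]

lemma goldenRatio_sub_inv : φ - φ⁻¹ = 1 := by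
  rw [inv_goldenRatio, sub_neg_eq_add, goldenRatio_add_goldenConj]

lemma sqrt_five_sub_two : √5 - 2 = (φ ^ 3)⁻¹ := by
  rw [← goldenRatio_add_inv, ← inv_pow]
  grind [goldenRatio_sub_inv, goldenRatio_ne_zero]

lemma two_mul_cos_pi_div_five : 2 * cos (π / 5) = φ := by
  rw [cos_pi_div_five, goldenRatio]
  ring

lemma two_mul_cos_two_pi_div_five : 2 * cos (2 * (π / 5)) = φ⁻¹ := by
  rw [cos_two_mul]
  linear_combination (2 * cos (π / 5) + φ) * two_mul_cos_pi_div_five + goldenRatio_sq +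
    goldenRatio_sub_inv

lemma two_mul_sin_pi_div_ten : 2 * sin (π / 10) = φ⁻¹ := by
  rw [← two_mul_cos_two_pi_div_five, ← cos_pi_div_two_sub]
  ring_nf

lemma two_mul_sin_three_pi_div_ten : 2 * sin (3 * (π / 10)) = φ := by
  rw [← two_mul_cos_pi_div_five, ← cos_pi_div_two_sub]
  ring_nf

lemma two_mul_sin_pi_div_five_sq : (2 * sin (π / 5)) ^ 2 = √5 * φ⁻¹ := by
  have h_inv : φ * φ⁻¹ = 1 := mul_inv_cancel₀ goldenRatio_ne_zero
  rw [mul_pow, sin_sq_eq_half_sub, ← goldenRatio_add_inv]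
  grind [two_mul_cos_two_pi_div_five, goldenRatio_sub_inv]

lemma two_mul_sin_two_pi_div_five_sq : (2 * sin (2 * (π / 5))) ^ 2 = √5 * φ := by
  have h_inv : φ * φ⁻¹ = 1 := mul_inv_cancel₀ goldenRatio_ne_zero
  rw [mul_pow, sin_sq, ← goldenRatio_add_inv]
  grind [two_mul_cos_two_pi_div_five, goldenRatio_sub_inv]

lemma log_two_mul_sin_pi_div_five : log (2 * sin (π / 5)) = (log √5 - log φ) / 2 := by
  have h := congrArg log two_mul_sin_pi_div_five_sq
  rw [log_pow, log_mul (by simp) (inv_ne_zero goldenRatio_ne_zero), log_inv] at h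
  push_cast at h
  linarith

lemma log_two_mul_sin_two_pi_div_five : log (2 * sin (2 * (π / 5))) = (log √5 + log φ) / 2 := by
  have h := congrArg log two_mul_sin_two_pi_div_five_sq
  rw [log_pow, log_mul (by simp) goldenRatio_ne_zero] at h
  push_cast at h
  linarith

lemma log_sqrt_five_sub_two : log (√5 - 2) = -3 * log φ := by
  rw [sqrt_five_sub_two, log_inv, log_pow]
  push_cast
  ring

lemma cot_pi_div_ten : cot (π / 10) = √(10 + 2 * √5) / (√5 - 1) := by
  have h_sqrt : √(10 + 2 * √5) = 4 * cos (π / 10) := by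
    have h_cos : 0 ≤ cos (π / 10) :=
      cos_nonneg_of_mem_Icc ⟨by linarith [pi_pos], by linarith [pi_pos]⟩
    rw [sqrt_eq_iff_mul_self_eq (by positivity) (by positivity)]
    have h_cos_sq : cos (π / 10) ^ 2 = (5 + √5) / 8 := by
      rw [cos_sq, show 2 * (π / 10) = π / 5 by ring, cos_pi_div_five]
      ring
    linear_combination -16 * h_cos_sq
  have h_sin : √5 - 1 = 4 * sin (π / 10) := by
    linear_combination (-2) * two_mul_sin_pi_div_ten - goldenRatio_add_inv + goldenRatio_sub_inv
  rw [h_sqrt, h_sin, cot_eq_cos_div_sin, mul_div_mul_left _ _ four_ne_zero]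

lemma sum_cos_mul_log_two_sin_ten :
    ∑ j ∈ Ico (1 : ℕ) 10, cos (2 * (π * j / 10)) * log (2 * sin (π * j / 10)) =
      1 / 2 * (√5 * log (√5 - 2) - log √5) - log 2 := by
  set F : ℕ → ℝ := fun j ↦ cos (2 * (π * j / 10)) * log (2 * sin (π * j / 10)) with hF
  have h_symm (j : ℕ) (hj : j ∈ Ico 1 5) : F (2 * 5 - j) = F j := by
    have h_angle : π * (10 - j : ℕ) / 10 = π - π * j / 10 :=
      pi_mul_sub_div (m := 10) (by simp) (by grind)
    simp only [hF, Nat.reduceMul, h_angle, mul_sub, sin_pi_sub, cos_two_pi_sub]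
  have h_cos1 : cos (π / 5) = φ / 2 := by linarith [two_mul_cos_pi_div_five]
  have h_cos2 : cos (2 * (π / 5)) = φ⁻¹ / 2 := by linarith [two_mul_cos_two_pi_div_five]
  have hF1 : F 1 = φ / 2 * -log φ := by
    rw [← log_inv, ← two_mul_sin_pi_div_ten, ← h_cos1, hF]
    ring_nf
  have hF2 : F 2 = φ⁻¹ / 2 * ((log √5 - log φ) / 2) := by
    rw [← log_two_mul_sin_pi_div_five, ← h_cos2, hF]
    ring_nf
  have hF3 : F 3 = -(φ⁻¹ / 2) * log φ := by
    rw [← h_cos2, ← cos_pi_sub, ← two_mul_sin_three_pi_div_ten, hF]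
    ring_nf
  have hF4 : F 4 = -(φ / 2) * ((log √5 + log φ) / 2) := by
    rw [← log_two_mul_sin_two_pi_div_five, ← h_cos1, ← cos_pi_sub, hF]
    ring_nf
  have hF5 : F 5 = -log 2 := by
    have h_angle : π * (5 : ℕ) / 10 = π / 2 := by push_cast; ring
    simp only [hF, h_angle]
    simp [mul_div_cancel₀]
  calc ∑ j ∈ Ico 1 10, F j = 2 * (F 1 + F 2 + F 3 + F 4) + F 5 := by
        rw [sum_Ico_one_two_mul_of_reflect (n := 5) (by simp) h_symm, nsmul_eq_mul]
        simp [sum_Ico_eq_sum_range, sum_range_succ]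
    _ = _ := by
        rw [hF1, hF2, hF3, hF4, hF5, log_sqrt_five_sub_two]
        linear_combination (-3 / 2 * log φ) * goldenRatio_add_inv -
          (1 / 2 * log √5) * goldenRatio_sub_inv

end GoldenRatio

theorem digamma_one_tenth :
    digamma (1 / 10) =
      -Real.eulerMascheroniConstant - Real.log 20
        - (Real.sqrt (10 + 2 * Real.sqrt 5) / (Real.sqrt 5 - 1)) * (Real.pi / 2)
        + (1 / 2) * (Real.sqrt 5 * Real.log (Real.sqrt 5 - 2) - Real.log (Real.sqrt 5)) := by
  have h_gauss := digamma_natCast_div_natCast (m := 10) one_pos (by norm_num)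
  have h_log : log 20 = log 10 + log 2 := by rw [← log_mul] <;> norm_num
  simp only [Nat.cast_one, Nat.cast_ofNat, mul_one, cot_pi_div_ten,
    sum_cos_mul_log_two_sin_ten] at h_gauss
  rw [h_gauss, h_log]
  ring
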